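/- For every tournament T of order n ≥ 3, n/(2·log₂((2n+2)/3)) ≤ dac(T) ≤ ⌈n/2⌉. -/

import Mathlib

/-- The subset `S` of vertices induces an acyclic subdigraph of the digraph with
arc relation `A` (i.e. there is no directed cycle all of whose vertices lie in `S`). -/
def AcyclicSet {V : Type*} (A : V → V → Prop) (S : Set V) : Prop :=
  ∀ v : V, ¬ Relation.TransGen (fun x y => x ∈ S ∧ y ∈ S ∧ A x y) v v

/-- `c` is an acyclic vertex coloring of the digraph `A` with `k` colors:
`c` is surjective and every chromatic class induces an acyclic subdigraph. -/
def IsAcyclicColoring {V : Type*} (A : V → V → Prop) {k : ℕ} (c : V → Fin k) : Prop :=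
  Function.Surjective c ∧ ∀ i : Fin k, AcyclicSet A {v | c v = i}

/-- `c` is a complete vertex coloring of the digraph `A` with `k` colors:
`c` is surjective and for every ordered pair of distinct colors `(i, j)` there is
an arc `(u, v)` with `c u = i` and `c v = j`. -/
def IsCompleteColoring {V : Type*} (A : V → V → Prop) {k : ℕ} (c : V → Fin k) : Prop :=
  Function.Surjective c ∧
    ∀ i j : Fin k, i ≠ j → ∃ u v : V, A u v ∧ c u = i ∧ c v = j

/-- The diachromatic number: the largest `k` admitting a complete acyclic `k`-coloring. -/
noncomputable def dac {V : Type*} (A : V → V → Prop) : ℕ :=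
  sSup {k | ∃ c : V → Fin k, IsAcyclicColoring A c ∧ IsCompleteColoring A c}

/-- The dichromatic number: the smallest `k` admitting an acyclic `k`-coloring. -/
noncomputable def dc {V : Type*} (A : V → V → Prop) : ℕ :=
  sInf {k | ∃ c : V → Fin k, IsAcyclicColoring A c}

/-- The pseudoachromatic number: the largest `k` admitting a complete `k`-coloring. -/
noncomputable def psi {V : Type*} (A : V → V → Prop) : ℕ :=
  sSup {k | ∃ c : V → Fin k, IsCompleteColoring A c}

/-- `A` is a tournament: no loops, and for distinct vertices exactly one of the
two possible arcs is present. -/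
def IsTournament {V : Type*} (A : V → V → Prop) : Prop :=
  (∀ v : V, ¬ A v v) ∧ ∀ u v : V, u ≠ v → (A u v ↔ ¬ A v u)

open Finset Classical in
theorem aux_exists_small {V : Type*} (A : V → V → Prop) (hT : IsTournament A)
    (U : Finset V) (hU : U.Nonempty) :
    ∃ w ∈ U, 2 * (U.filter (fun u => A u w)).card + 1 ≤ U.card := by
  by_contra hcon
  push Not at hcon
  have h1 : ∑ w ∈ U, (U.filter (fun u => A u w)).card
      = ∑ w ∈ U, (U.filter (fun u => A w u)).card := by
    simp only [Finset.card_filter]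
    rw [Finset.sum_comm]
  have h2 : ∀ w ∈ U, (U.filter (fun u => A u w)).card + (U.filter (fun u => A w u)).card + 1
      = U.card := by
    intro w hw
    rw [← Finset.card_union_of_disjoint, ← Finset.card_erase_add_one hw]
    · congr 2
      ext u
      simp only [Finset.mem_union, Finset.mem_filter, Finset.mem_erase]
      have := hT.1 w
      have := hT.2 u w
      grind
    · rw [Finset.disjoint_left]
      intro u hu hu'
      simp only [Finset.mem_filter] at hu hu'
      have := hT.1 w
      have := hT.2 u w
      grind
  have h3 : ∑ w ∈ U, U.card < ∑ w ∈ U, (2 * (U.filter (fun u => A u w)).card + 1) :=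
    Finset.sum_lt_sum_of_nonempty hU hcon
  have h4 : ∑ w ∈ U, (2 * (U.filter (fun u => A u w)).card + 1) = ∑ w ∈ U, U.card := by
    rw [← Finset.sum_congr rfl h2]
    simp only [Finset.sum_add_distrib, ← Finset.mul_sum]
    omega
  omega

/-- transitivity of the relation on a finset -/
def TransOn {V : Type*} (A : V → V → Prop) (C : Finset V) : Prop :=
  ∀ x ∈ C, ∀ y ∈ C, ∀ z ∈ C, A x y → A y z → A x z

theorem aux_asymm {V : Type*} {A : V → V → Prop} (hT : IsTournament A) (x y : V)
    (h : A x y) : ¬ A y x := by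
  have := hT.1 x
  have := hT.2 x y
  grind

theorem aux_total {V : Type*} {A : V → V → Prop} (hT : IsTournament A) (x y : V)
    (h : ¬ A x y) (hne : x ≠ y) : A y x := by
  have := hT.2 x y
  grind

open Classical in
theorem aux_trans_insert {V : Type*} (A : V → V → Prop) (hT : IsTournament A)
    (C : Finset V) (hC : TransOn A C) (w : V) (hw : ∀ x ∈ C, A w x) :
    TransOn A (insert w C) := by
  have h1 := aux_asymm hT
  have h2 := hT.1
  intro x hx y hy z hz hxy hyz
  rw [Finset.mem_insert] at hx hy hz
  unfold TransOn at hC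
  rcases hx with rfl | hx <;> rcases hy with rfl | hy <;> rcases hz with rfl | hz <;> grind

open Classical in
theorem aux_top {V : Type*} (A : V → V → Prop) (hT : IsTournament A) :
    ∀ (n : ℕ) (C U : Finset V), U.card = n → TransOn A C → (∀ w ∈ U, ∀ x ∈ C, A w x) →
    ∃ D ⊆ U, TransOn A (C ∪ D) ∧ 2 ^ D.card ≤ U.card + 1 ∧
      ∀ u ∈ U, u ∉ D → ∃ d ∈ D, A d u := by
  intro n
  induction n using Nat.strong_induction_on with
  | _ n ih =>
    intro C U hn hC hU
    rcases U.eq_empty_or_nonempty with rfl | hne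
    · exact ⟨∅, by simp, by simpa using hC, by simp, by simp⟩
    · obtain ⟨w, hw, hcard⟩ := aux_exists_small A hT U hne
      obtain ⟨D, hDU, hD1, hD2, hD3⟩ := ih (U.filter (fun u => A u w)).card (by omega)
        (insert w C) (U.filter (fun u => A u w)) rfl
        (aux_trans_insert A hT C hC w (hU w hw)) (by
          intro v hv x hx
          rw [Finset.mem_filter] at hv
          rw [Finset.mem_insert] at hx
          rcases hx with rfl | hx
          · exact hv.2
          · exact hU v hv.1 x hx)
      refine ⟨insert w D, ?_, ?_, ?_, ?_⟩
      · intro x hx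
        rw [Finset.mem_insert] at hx
        rcases hx with rfl | hx
        · exact hw
        · exact (Finset.mem_filter.1 (hDU hx)).1
      · rw [Finset.union_insert, ← Finset.insert_union]
        exact hD1
      · have : (insert w D).card ≤ D.card + 1 := Finset.card_insert_le _ _
        calc 2 ^ (insert w D).card ≤ 2 ^ (D.card + 1) := Nat.pow_le_pow_right (by norm_num) this
          _ = 2 * 2 ^ D.card := by ring
          _ ≤ _ := by omega
      · intro u hu hud
        rw [Finset.mem_insert, not_or] at hud
        by_cases h : A u w
        · obtain ⟨d, hd, hdu⟩ := hD3 u (Finset.mem_filter.2 ⟨hu, h⟩) hud.2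
          exact ⟨d, Finset.mem_insert_of_mem hd, hdu⟩
        · exact ⟨w, Finset.mem_insert_self _ _, aux_total hT u w h hud.1⟩

theorem aux_swap {V : Type*} {A : V → V → Prop} (hT : IsTournament A) :
    IsTournament (fun x y => A y x) :=
  ⟨hT.1, fun u v h => hT.2 v u h.symm⟩

theorem aux_trans_swap {V : Type*} {A : V → V → Prop} {C : Finset V} (h : TransOn A C) :
    TransOn (fun x y => A y x) C :=
  fun x hx y hy z hz hxy hyz => h z hz y hy x hx hyz hxy

open Classical in
theorem aux_class {V : Type*} (A : V → V → Prop) (hT : IsTournament A) (S : Finset V)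
    (hS : S.Nonempty) : ∃ C ⊆ S, C.Nonempty ∧ TransOn A C ∧ 2 ^ (C.card + 1) ≤ (S.card + 1) ^ 2 ∧
      ∀ u ∈ S, u ∉ C → (∃ d ∈ C, A d u) ∧ (∃ d ∈ C, A u d) := by
  obtain ⟨v, hv⟩ := hS
  have hasy := aux_asymm hT
  set P := S.filter (fun u => A u v) with hP
  set Q := S.filter (fun u => A v u) with hQ
  have hPQ : P.card + Q.card + 1 = S.card := by
    rw [← Finset.card_union_of_disjoint, ← Finset.card_erase_add_one hv]
    · congr 2
      ext u
      simp only [hP, hQ, Finset.mem_union, Finset.mem_filter, Finset.mem_erase]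
      have := hT.1 v
      have := hT.2 u v
      grind
    · rw [Finset.disjoint_left]
      intro u hu hu'
      rw [Finset.mem_filter] at hu hu'
      exact hasy _ _ hu.2 hu'.2
  have hv0 : TransOn A {v} := by
    intro x hx y hy z hz hxy hyz
    simp only [Finset.mem_singleton] at hx hy hz
    subst hx hy hz
    exact hxy
  obtain ⟨D, hDP, hD1, hD2, hD3⟩ := aux_top A hT _ {v} P rfl hv0 (by
    intro w hw x hx
    rw [Finset.mem_singleton] at hx
    subst hx
    exact (Finset.mem_filter.1 hw).2)
  set R := Q.filter (fun u => ∀ x ∈ {v} ∪ D, A x u) with hR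
  obtain ⟨E, hER, hE1, hE2, hE3⟩ := aux_top (fun x y => A y x) (aux_swap hT) _ ({v} ∪ D) R rfl
    (aux_trans_swap hD1) (by
    intro w hw x hx
    exact (Finset.mem_filter.1 hw).2 x hx)
  have hRQ : R.card ≤ Q.card := Finset.card_le_card (Finset.filter_subset _ _)
  refine ⟨{v} ∪ D ∪ E, ?_, ⟨v, by simp⟩, aux_trans_swap hE1, ?_, ?_⟩
  · intro x hx
    simp only [Finset.mem_union, Finset.mem_singleton] at hx
    rcases hx with (rfl | hx) | hx
    · exact hv
    · exact (Finset.mem_filter.1 (hDP hx)).1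
    · exact (Finset.mem_filter.1 (Finset.mem_filter.1 (hER hx)).1).1
  · have hc : ({v} ∪ D ∪ E).card ≤ 1 + D.card + E.card := by
      have h1 := Finset.card_union_le ({v} ∪ D) E
      have h2 := Finset.card_union_le {v} D
      simp only [Finset.card_singleton] at h2
      omega
    calc 2 ^ (({v} ∪ D ∪ E).card + 1) ≤ 2 ^ (1 + D.card + E.card + 1) :=
          Nat.pow_le_pow_right (by norm_num) (by omega)
      _ = 4 * (2 ^ D.card * 2 ^ E.card) := by ring
      _ ≤ 4 * ((P.card + 1) * (Q.card + 1)) := by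
          gcongr
          omega
      _ ≤ _ := by
          rw [← hPQ]
          zify
          nlinarith [sq_nonneg ((P.card : ℤ) - Q.card)]
  · intro u hu huC
    simp only [Finset.mem_union, Finset.mem_singleton, not_or] at huC
    obtain ⟨⟨huv, huD⟩, huE⟩ := huC
    by_cases h : A u v
    · refine ⟨?_, v, by simp, h⟩
      obtain ⟨d, hd, hdu⟩ := hD3 u (Finset.mem_filter.2 ⟨hu, h⟩) huD
      exact ⟨d, by simp [hd], hdu⟩
    · have h' := aux_total hT u v h huv
      refine ⟨⟨v, by simp, h'⟩, ?_⟩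
      by_cases hr : ∀ x ∈ {v} ∪ D, A x u
      · obtain ⟨d, hd, hdu⟩ := hE3 u (Finset.mem_filter.2 ⟨Finset.mem_filter.2 ⟨hu, h'⟩, hr⟩) huE
        exact ⟨d, by simp [hd], hdu⟩
      · push Not at hr
        obtain ⟨x, hx, hxu⟩ := hr
        refine ⟨x, Finset.mem_union_left _ hx, aux_total hT x u hxu ?_⟩
        rintro rfl
        simp only [Finset.mem_union, Finset.mem_singleton] at hx
        tauto

open Classical in
theorem aux_three {V : Type*} (A : V → V → Prop) (hT : IsTournament A) (S : Finset V)
    (hS : S.card = 3) : ∃ C ⊆ S, C.card = 2 ∧ TransOn A C ∧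
      ∀ u ∈ S, u ∉ C → (∃ d ∈ C, A d u) ∧ (∃ d ∈ C, A u d) := by
  have hasy := aux_asymm hT
  have key : ∃ a b c : V, a ≠ b ∧ a ≠ c ∧ b ≠ c ∧ S = {a, b, c} ∧ A a b ∧ A b c := by
    obtain ⟨x, y, z, hxy, hxz, hyz, rfl⟩ := Finset.card_eq_three.1 hS
    have e1 := hT.2 x y hxy
    have e2 := hT.2 x z hxz
    have e3 := hT.2 y z hyz
    by_cases h1 : A x y <;> by_cases h2 : A x z <;> by_cases h3 : A y z
    · exact ⟨x, y, z, hxy, hxz, hyz, rfl, h1, h3⟩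
    · exact ⟨x, z, y, hxz, hxy, hyz.symm, by grind, h2, by tauto⟩
    · exact ⟨x, y, z, hxy, hxz, hyz, rfl, h1, h3⟩
    · exact ⟨z, x, y, hxz.symm, hyz.symm, hxy, by grind, by tauto, h1⟩
    · exact ⟨y, x, z, hxy.symm, hyz, hxz, by grind, by tauto, h2⟩
    · exact ⟨y, x, z, hxy.symm, hyz, hxz, by grind, by tauto, h2⟩
    · exact ⟨y, z, x, hyz, hxy.symm, hxz.symm, by grind, h3, by tauto⟩
    · exact ⟨z, y, x, hyz.symm, hxz.symm, hxy.symm, by grind, by tauto, by tauto⟩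
  obtain ⟨a, b, c, hab, hac, hbc, rfl, h1, h2⟩ := key
  refine ⟨{a, c}, by grind, Finset.card_pair hac, ?_, ?_⟩
  · have := hT.1 a
    have := hT.1 c
    intro x hx y hy z hz hxy hyz
    have := hasy x y hxy
    simp only [Finset.mem_insert, Finset.mem_singleton] at hx hy hz
    grind
  · intro u hu hu'
    have : u = b := by grind
    subst this
    exact ⟨⟨a, by simp, h1⟩, ⟨c, by simp, h2⟩⟩

theorem aux_pow1 (n : ℕ) (hn : 4 ≤ n) : (n + 1) ^ 2 < 2 ^ (n + 1) := by
  induction n, hn using Nat.le_induction with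
  | base => norm_num
  | succ k hk ih =>
    rw [pow_succ 2 (k + 1)]
    nlinarith

open Classical in
theorem aux_class' {V : Type*} (A : V → V → Prop) (hT : IsTournament A) (S : Finset V)
    (hS : S.Nonempty) : ∃ C ⊆ S, C.Nonempty ∧ TransOn A C ∧ 2 ^ (C.card + 1) ≤ (S.card + 1) ^ 2 ∧
      (3 ≤ S.card → C.card < S.card) ∧
      ∀ u ∈ S, u ∉ C → (∃ d ∈ C, A d u) ∧ (∃ d ∈ C, A u d) := by
  by_cases h3 : S.card = 3
  · obtain ⟨C, h1, h2, h3', h4⟩ := aux_three A hT S h3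
    exact ⟨C, h1, Finset.card_pos.1 (by omega), h3', by rw [h2, h3]; norm_num, by omega, h4⟩
  · obtain ⟨C, h1, h2, h3', h4, h5⟩ := aux_class A hT S hS
    refine ⟨C, h1, h2, h3', h4, ?_, h5⟩
    intro h
    have hle := Finset.card_le_card h1
    rcases hle.lt_or_eq with hlt | heq
    · exact hlt
    · have := aux_pow1 S.card (by omega)
      rw [heq] at h4
      omega

theorem aux_pow2 (s : ℕ) (hs : 10 ≤ s) : (4 * s + 3) ^ 2 < 9 * 2 ^ (s + 1) := by
  induction s, hs using Nat.le_induction with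
  | base => norm_num
  | succ k hk ih =>
    rw [pow_succ 2 (k + 1)]
    nlinarith

theorem aux_small (n : ℕ) (h3 : 3 ≤ n) (h12 : n ≤ 12) :
    (n : ℝ) / (2 * Real.logb 2 ((2 * (n : ℝ) + 2) / 3)) ≤ 2 := by
  have hn : (3 : ℝ) ≤ n := by exact_mod_cast h3
  have hpos : 0 < Real.logb 2 ((2 * (n : ℝ) + 2) / 3) := Real.logb_pos (by norm_num) (by linarith)
  rw [div_le_iff₀ (by positivity)]
  have : (n : ℝ) ≤ 4 * Real.logb 2 ((2 * (n : ℝ) + 2) / 3) := by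
    have e : 4 * Real.logb 2 ((2 * (n : ℝ) + 2) / 3)
        = Real.logb 2 (((2 * (n : ℝ) + 2) / 3) ^ 4) := by
      rw [Real.logb_pow]; norm_num
    rw [e, Real.le_logb_iff_rpow_le (by norm_num) (by positivity), Real.rpow_natCast]
    interval_cases n <;> norm_num
  linarith

theorem aux_step (n s m : ℕ) (hn : 13 ≤ n) (hm : n = m + s) (hs : 2 ^ (s + 1) ≤ (n + 1) ^ 2) :
    3 ≤ m ∧ (n : ℝ) / (2 * Real.logb 2 ((2 * (n : ℝ) + 2) / 3)) ≤
      (m : ℝ) / (2 * Real.logb 2 ((2 * (m : ℝ) + 2) / 3)) + 1 := by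
  have h4 : n + 1 ≤ 4 * m := by
    by_contra hcon
    have h10 : 10 ≤ s := by omega
    have := aux_pow2 s h10
    have h3 : 3 * (n + 1) ≤ 4 * s + 3 := by omega
    have h5 : (3 * (n + 1)) ^ 2 ≤ (4 * s + 3) ^ 2 := Nat.pow_le_pow_left h3 2
    nlinarith
  have hm3 : 3 ≤ m := by omega
  refine ⟨hm3, ?_⟩
  have hmR : (3 : ℝ) ≤ m := by exact_mod_cast hm3
  have hnR : (13 : ℝ) ≤ n := by exact_mod_cast hn
  have h4R : (n : ℝ) + 1 ≤ 4 * m := by exact_mod_cast h4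
  have hs0 : (0 : ℝ) ≤ s := Nat.cast_nonneg s
  have hnms : (n : ℝ) = m + s := by exact_mod_cast hm
  have hsR : (2 : ℝ) ^ (s + 1) ≤ ((n : ℝ) + 1) ^ 2 := by exact_mod_cast hs
  set x := Real.logb 2 ((2 * (n : ℝ) + 2) / 3) with hx
  set y := Real.logb 2 ((2 * (m : ℝ) + 2) / 3) with hy
  have hx0 : 0 < x := Real.logb_pos (by norm_num) (by linarith)
  have hy0 : 0 < y := Real.logb_pos (by norm_num) (by linarith)
  have hyx : y ≤ x := Real.logb_le_logb_of_le (by norm_num) (by positivity) (by linarith)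
  -- s ≤ 2 x + 1/2
  have hsx : (s : ℝ) ≤ 2 * x + 1 / 2 := by
    have e1 : ((s : ℝ) + 1) ≤ Real.logb 2 (((n : ℝ) + 1) ^ 2) := by
      rw [Real.le_logb_iff_rpow_le (by norm_num) (by positivity)]
      have : ((s : ℝ) + 1) = ((s + 1 : ℕ) : ℝ) := by push_cast; ring
      rw [this, Real.rpow_natCast]
      exact hsR
    have e2 : Real.logb 2 (((n : ℝ) + 1) ^ 2) = 2 * Real.logb 2 ((n : ℝ) + 1) := by
      rw [Real.logb_pow]; norm_num
    have e3 : Real.logb 2 ((n : ℝ) + 1) = x + Real.logb 2 (3 / 2) := by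
      rw [hx, ← Real.logb_mul (by positivity) (by norm_num)]
      congr 1
      ring
    have e4 : 4 * Real.logb 2 (3 / 2) ≤ 3 := by
      have : 4 * Real.logb 2 (3 / 2) = Real.logb 2 ((3 / 2) ^ 4) := by
        rw [Real.logb_pow]; norm_num
      rw [this, Real.logb_le_iff_le_rpow (by norm_num) (by positivity)]
      norm_num
    linarith
  -- x - y ≥ s / (n+1)
  have hxy : (s : ℝ) / (n + 1) ≤ x - y := by
    have e1 : x - y = - Real.logb 2 (((m : ℝ) + 1) / (n + 1)) := by
      rw [hx, hy, ← Real.logb_div (by positivity) (by positivity), ← Real.logb_inv]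
      congr 1
      field_simp
    have e2 : Real.log (((m : ℝ) + 1) / (n + 1)) ≤ ((m : ℝ) + 1) / (n + 1) - 1 :=
      Real.log_le_sub_one_of_pos (by positivity)
    have e3 : ((m : ℝ) + 1) / (n + 1) - 1 = - (s / (n + 1)) := by
      rw [hnms]
      field_simp
      ring
    have e4 : (s : ℝ) / (n + 1) ≤ - Real.log (((m : ℝ) + 1) / (n + 1)) := by linarith
    rw [e1, Real.logb, ← neg_div]
    have hl0 : 0 < Real.log 2 := Real.log_pos (by norm_num)
    have hl1 : Real.log 2 ≤ 1 := by linarith [Real.log_le_sub_one_of_pos (x := 2) (by norm_num)]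
    rw [le_div_iff₀ hl0]
    have : 0 ≤ (s : ℝ) / (n + 1) := by positivity
    nlinarith
  have hms : (s : ℝ) / 4 ≤ m * (x - y) := by
    have e1 : (m : ℝ) * (s / (n + 1)) ≤ m * (x - y) := by gcongr
    have e2 : (s : ℝ) / 4 ≤ m * (s / (n + 1)) := by
      rw [← mul_div_assoc, div_le_div_iff₀ (by norm_num) (by positivity)]
      nlinarith
    linarith
  have hfin : (s - 2 * x) * y ≤ m * (x - y) := by
    by_cases hc : (s : ℝ) ≤ 2 * x
    · have : (s - 2 * x) * y ≤ 0 := mul_nonpos_of_nonpos_of_nonneg (by linarith) hy0.le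
      linarith
    · push Not at hc
      nlinarith
  rw [div_add_one (by positivity), div_le_div_iff₀ (by positivity) (by positivity)]
  rw [hnms]
  nlinarith

theorem aux_acyclic {V : Type*} (A : V → V → Prop) (hT : IsTournament A) (C : Finset V)
    (hC : TransOn A C) (S : Set V) (hS : S ⊆ C) : AcyclicSet A S := by
  intro v hv
  have key : ∀ y, Relation.TransGen (fun x y => x ∈ S ∧ y ∈ S ∧ A x y) v y →
      v ∈ S ∧ y ∈ S ∧ A v y := by
    intro y h
    induction h with
    | single h => exact h
    | tail _ h ih =>
      exact ⟨ih.1, h.2.1, hC _ (hS ih.1) _ (hS ih.2.1) _ (hS h.2.1) ih.2.2 h.2.2⟩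
  exact hT.1 v (key v hv).2.2

open Classical in
theorem aux_main {V : Type*} (A : V → V → Prop) (hT : IsTournament A) :
    ∀ (n : ℕ) (S : Finset V), S.card = n → ∃ (k : ℕ) (c : V → ℕ),
      (∀ v ∈ S, c v < k) ∧ (∀ i < k, ∃ v ∈ S, c v = i) ∧
      (∀ i, AcyclicSet A {v | v ∈ S ∧ c v = i}) ∧
      (∀ i < k, ∀ j < k, i ≠ j → ∃ u ∈ S, ∃ v ∈ S, A u v ∧ c u = i ∧ c v = j) ∧
      (1 ≤ n → 1 ≤ k) ∧ (3 ≤ n → 2 ≤ k) ∧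
      (3 ≤ n → (n : ℝ) / (2 * Real.logb 2 ((2 * (n : ℝ) + 2) / 3)) ≤ k) := by
  intro n
  induction n using Nat.strong_induction_on with
  | _ n ih =>
    intro S hn
    rcases S.eq_empty_or_nonempty with rfl | hne
    · simp only [Finset.card_empty] at hn
      subst hn
      refine ⟨0, fun _ => 0, by simp, by simp, ?_, by simp, by simp, by simp, by simp⟩
      intro i
      exact aux_acyclic A hT ∅ (by intro x hx; simp at hx) _ (by intro x hx; simp at hx)
    obtain ⟨C, hCS, hC0, hCt, hCp, hC3, hCd⟩ := aux_class' A hT S hne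
    have hcard : (S \ C).card + C.card = S.card := Finset.card_sdiff_add_card_eq_card hCS
    have hCpos := Finset.card_pos.2 hC0
    obtain ⟨k, c, h1, h2, h3, h4, h5, h6, h7⟩ := ih (S \ C).card (by omega) (S \ C) rfl
    set c' : V → ℕ := fun v => if v ∈ C then k else c v with hc'
    have hin : ∀ v ∈ C, c' v = k := fun v hv => by simp [hc', hv]
    have hout : ∀ v, v ∉ C → c' v = c v := fun v hv => by simp [hc', hv]
    have hk2 : 3 ≤ n → 2 ≤ k + 1 := by
      intro h
      have := hC3 (by omega)
      have := h5 (by omega)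
      omega
    refine ⟨k + 1, c', ?_, ?_, ?_, ?_, by omega, hk2, ?_⟩
    · intro v hv
      by_cases hvC : v ∈ C
      · rw [hin v hvC]; omega
      · rw [hout v hvC]
        have := h1 v (Finset.mem_sdiff.2 ⟨hv, hvC⟩)
        omega
    · intro i hi
      by_cases hik : i = k
      · obtain ⟨v, hv⟩ := hC0
        exact ⟨v, hCS hv, by rw [hin v hv, hik]⟩
      · obtain ⟨v, hv, hvi⟩ := h2 i (by omega)
        rw [Finset.mem_sdiff] at hv
        exact ⟨v, hv.1, by rw [hout v hv.2, hvi]⟩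
    · intro i
      by_cases hik : i = k
      · apply aux_acyclic A hT C hCt
        rintro v ⟨hvS, hv⟩
        by_contra hvC
        have hvC' : v ∉ C := hvC
        rw [hout v hvC'] at hv
        have := h1 v (Finset.mem_sdiff.2 ⟨hvS, hvC'⟩)
        omega
      · have : {v | v ∈ S ∧ c' v = i} = {v | v ∈ S \ C ∧ c v = i} := by
          ext v
          simp only [Set.mem_setOf_eq, Finset.mem_sdiff]
          by_cases hvC : v ∈ C
          · simp only [hin v hvC, hvC, not_true, and_false, false_and, iff_false]
            omega
          · simp [hout v hvC, hvC]
        rw [this]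
        exact h3 i
    · intro i hi j hj hij
      by_cases hik : i = k
      · obtain ⟨v, hv, hvj⟩ := h2 j (by omega)
        rw [Finset.mem_sdiff] at hv
        obtain ⟨⟨d, hd, hdv⟩, _⟩ := hCd v hv.1 hv.2
        exact ⟨d, hCS hd, v, hv.1, hdv, by rw [hin d hd, hik], by rw [hout v hv.2, hvj]⟩
      · by_cases hjk : j = k
        · obtain ⟨v, hv, hvj⟩ := h2 i (by omega)
          rw [Finset.mem_sdiff] at hv
          obtain ⟨_, ⟨d, hd, hdv⟩⟩ := hCd v hv.1 hv.2
          exact ⟨v, hv.1, d, hCS hd, hdv, by rw [hout v hv.2, hvj], by rw [hin d hd, hjk]⟩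
        · obtain ⟨u, hu, v, hv, huv, hui, hvj⟩ := h4 i (by omega) j (by omega) hij
          rw [Finset.mem_sdiff] at hu hv
          exact ⟨u, hu.1, v, hv.1, huv, by rw [hout u hu.2, hui], by rw [hout v hv.2, hvj]⟩
    · intro hn3
      by_cases hn12 : n ≤ 12
      · have e1 := aux_small n hn3 hn12
        have e2 : (2 : ℝ) ≤ ((k + 1 : ℕ) : ℝ) := by exact_mod_cast hk2 hn3
        linarith
      · obtain ⟨e1, e2⟩ := aux_step n C.card (S \ C).card (by omega) (by omega)
          (by rw [← hn]; exact hCp)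
        have e3 := h7 e1
        push_cast
        linarith

open Classical in
theorem aux_upper {V : Type*} [Fintype V] (A : V → V → Prop) (hT : IsTournament A)
    (k : ℕ) (c : V → Fin k) (hc : IsCompleteColoring A c) :
    k ≤ (Fintype.card V + 1) / 2 := by
  set f : Fin k → ℕ := fun i => (Finset.univ.filter (fun v => c v = i)).card with hf
  have hsum : ∑ i, f i = Fintype.card V := by
    rw [← Finset.card_univ]
    exact (Finset.card_eq_sum_card_fiberwise (by simp)).symm
  have hpos : ∀ i, 1 ≤ f i := by
    intro i
    obtain ⟨v, hv⟩ := hc.1 i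
    exact Finset.card_pos.2 ⟨v, by simp [hv]⟩
  have hone : ∀ i j, i ≠ j → f i ≤ 1 → 2 ≤ f j := by
    intro i j hij hi
    by_contra hj
    have hj' : f j ≤ 1 := by omega
    obtain ⟨u, v, huv, hu, hv⟩ := hc.2 i j hij
    obtain ⟨v', u', huv', hv', hu'⟩ := hc.2 j i hij.symm
    have e1 : u = u' := Finset.card_le_one.1 hi u (by simp [hu]) u' (by simp [hu'])
    have e2 : v = v' := Finset.card_le_one.1 hj' v (by simp [hv]) v' (by simp [hv'])
    subst e1 e2
    exact aux_asymm hT _ _ huv huv'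
  by_cases hex : ∃ i, f i ≤ 1
  · obtain ⟨i, hi⟩ := hex
    have h1 : ∑ j ∈ Finset.univ.erase i, 2 ≤ ∑ j ∈ Finset.univ.erase i, f j :=
      Finset.sum_le_sum (fun j hj => hone i j (Finset.ne_of_mem_erase hj).symm hi)
    have h2 := Finset.add_sum_erase Finset.univ f (Finset.mem_univ i)
    simp only [Finset.sum_const, Finset.card_erase_of_mem (Finset.mem_univ i), Finset.card_univ,
      Fintype.card_fin, smul_eq_mul] at h1
    have := hpos i
    omega
  · push Not at hex
    have h1 : ∑ j : Fin k, 2 ≤ ∑ j, f j := Finset.sum_le_sum (fun j _ => hex j)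
    simp only [Finset.sum_const, Finset.card_univ, Fintype.card_fin, smul_eq_mul] at h1
    omega

/-- For every tournament `T` of order `n ≥ 3`,
`n / (2·log₂((2n+2)/3)) ≤ dac(T) ≤ ⌈n/2⌉`. -/
theorem stmt9 {V : Type*} [Fintype V] (A : V → V → Prop)
    (hT : IsTournament A) (hn : 3 ≤ Fintype.card V) :
    (Fintype.card V : ℝ) /
        (2 * Real.logb 2 ((2 * (Fintype.card V : ℝ) + 2) / 3)) ≤ dac A ∧
      dac A ≤ (Fintype.card V + 1) / 2 := by
  have hub : ∀ k ∈ {k | ∃ c : V → Fin k, IsAcyclicColoring A c ∧ IsCompleteColoring A c},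
      k ≤ (Fintype.card V + 1) / 2 := by
    rintro k ⟨c, _, hc⟩
    exact aux_upper A hT k c hc
  refine ⟨?_, csSup_le' hub⟩
  obtain ⟨k, c, h1, h2, h3, h4, _, _, h7⟩ := aux_main A hT _ Finset.univ rfl
  rw [Finset.card_univ] at h7
  refine (h7 hn).trans ?_
  have hsurj : Function.Surjective (fun v => (⟨c v, h1 v (Finset.mem_univ v)⟩ : Fin k)) := by
    intro i
    obtain ⟨v, _, hv⟩ := h2 i i.2
    exact ⟨v, Fin.ext hv⟩
  have hk : k ≤ dac A := by
    refine le_csSup ⟨_, hub⟩ ⟨fun v => ⟨c v, h1 v (Finset.mem_univ v)⟩, ⟨hsurj, ?_⟩, hsurj, ?_⟩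
    · intro i
      have := h3 i
      simpa [Fin.ext_iff] using this
    · intro i j hij
      obtain ⟨u, _, v, _, huv, hu, hv⟩ := h4 i i.2 j j.2 (fun h => hij (Fin.ext h))
      exact ⟨u, v, huv, Fin.ext hu, Fin.ext hv⟩
  exact_mod_cast hk
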